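/- arXiv:2105.10091 — 6 statements merged into one kernel-verified Lean document; each statement's English description precedes it below -/
import Mathlib

section
/- Let n ≥ 1, let U ⊆ ℝⁿ be an open set that is star-shaped about the origin (i.e. x ∈ U and t ∈ [0,1] imply t·x ∈ U), let j ≥ 1 be an integer, let ρ : U → ℝ be continuously differentiable and everywhere positive, let g : U → ℂ be continuous, and let f : U → ℂ be continuously differentiable. Suppose that for all x ∈ U: Σ_{i=1}^n x_i ∂_i f(x) + ( j + ρ(x)^{−1} Σ_{i=1}^n x_i ∂_i ρ(x) ) · f(x) = g(x). Then for all x ∈ U: f(x) = ρ(x)^{−1} ∫₀¹ t^{j−1} ρ(t·x) g(t·x) dt. -/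
open MeasureTheory Set

/-!
Along the ray `t ↦ t • x` the Euler field is `t * d/dt`, so the transport equation becomes a linear
ordinary differential equation that is singular at `t = 0`. Its integrating factor is
`t ^ (j - 1) * ρ (t • x)`: multiplied by it, the equation reads
`d/dt ((t ^ j * ρ (t • x)) • f (t • x)) = (t ^ (j - 1) * ρ (t • x)) • g (t • x)`. The quantity being
differentiated vanishes at `t = 0` because `j > 0`, and it is `ρ x • f x` at `t = 1`, so the
fundamental theorem of calculus gives the formula.
-/

section RadialEquation

variable {F : Type*} [NormedAddCommGroup F] [NormedSpace ℝ F] {j : ℝ} {r : ℝ → ℝ} {u : ℝ → F}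

lemma hasDerivAt_rpow_mul_smul {t r' : ℝ} {u' : F} (ht : t ≠ 0) (hrt : r t ≠ 0)
    (hr : HasDerivAt r r' t) (hu : HasDerivAt u u' t) :
    HasDerivAt (fun s ↦ (s ^ j * r s) • u s)
      ((t ^ (j - 1) * r t) • (t • u' + (j + (r t)⁻¹ * (t * r')) • u t)) t := by
  have hpow : HasDerivAt (fun s : ℝ ↦ s ^ j) (j * t ^ (j - 1)) t :=
    Real.hasDerivAt_rpow_const (Or.inl ht)
  refine ((hpow.mul hr).smul hu).congr_deriv ?_
  have hsplit : t ^ j = t ^ (j - 1) * t := by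
    rw [Real.rpow_sub_one ht, div_mul_cancel₀ _ ht]
  simp only [Pi.mul_apply, hsplit]
  match_scalars <;> field_simp

lemma rpow_mul_smul_eq_integral [CompleteSpace F] {a : ℝ} {r' : ℝ → ℝ} {u' v : ℝ → F}
    (hj : 0 < j) (ha : 0 ≤ a)
    (hrc : ContinuousOn r (Icc 0 a)) (hr : ∀ t ∈ Ioo 0 a, HasDerivAt r (r' t) t)
    (hr0 : ∀ t ∈ Ioo 0 a, r t ≠ 0)
    (huc : ContinuousOn u (Icc 0 a)) (hu : ∀ t ∈ Ioo 0 a, HasDerivAt u (u' t) t)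
    (hvc : ContinuousOn v (Icc 0 a))
    (hode : ∀ t ∈ Ioo 0 a, t • u' t + (j + (r t)⁻¹ * (t * r' t)) • u t = v t) :
    (a ^ j * r a) • u a = ∫ t in 0..a, (t ^ (j - 1) * r t) • v t := by
  have hcont : ContinuousOn (fun t ↦ (t ^ j * r t) • u t) (Icc 0 a) :=
    ((Real.continuous_rpow_const hj.le).continuousOn.mul hrc).smul huc
  have hderiv : ∀ t ∈ Ioo 0 a,
      HasDerivAt (fun s ↦ (s ^ j * r s) • u s) ((t ^ (j - 1) * r t) • v t) t := fun t ht ↦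
    hode t ht ▸ hasDerivAt_rpow_mul_smul ht.1.ne' (hr0 t ht) (hr t ht) (hu t ht)
  have hint : IntervalIntegrable (fun t ↦ (t ^ (j - 1) * r t) • v t) volume 0 a := by
    rw [← uIcc_of_le ha] at hrc hvc
    have hpow : IntervalIntegrable (fun t : ℝ ↦ t ^ (j - 1)) volume 0 a :=
      intervalIntegral.intervalIntegrable_rpow' (by linarith)
    exact (hpow.mul_continuousOn hrc).smul_continuousOn hvc
  rw [intervalIntegral.integral_eq_sub_of_hasDerivAt_of_le ha hcont hderiv hint,
    Real.zero_rpow hj.ne', zero_mul, zero_smul, sub_zero]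

end RadialEquation

lemma mapsTo_smul_Icc_of_starConvex {E : Type*} [AddCommGroup E] [Module ℝ E] {U : Set E}
    (hU : StarConvex ℝ 0 U) {x : E} (hx : x ∈ U) : MapsTo (fun t : ℝ ↦ t • x) (Icc 0 1) U :=
  fun _ ht ↦ hU.smul_mem hx ht.1 ht.2

lemma continuousOn_comp_smul_of_starConvex {E X : Type*} [AddCommGroup E] [Module ℝ E]
    [TopologicalSpace E] [ContinuousSMul ℝ E] [TopologicalSpace X] {f : E → X} {U : Set E}
    (hU : StarConvex ℝ 0 U) (hf : ContinuousOn f U) {x : E} (hx : x ∈ U) :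
    ContinuousOn (fun t : ℝ ↦ f (t • x)) (Icc 0 1) :=
  hf.comp (by fun_prop) (mapsTo_smul_Icc_of_starConvex hU hx)

lemma hasDerivAt_comp_smul_of_starConvex {E F : Type*} [NormedAddCommGroup E] [NormedSpace ℝ E]
    [NormedAddCommGroup F] [NormedSpace ℝ F] {f : E → F} {U : Set E}
    (hU : StarConvex ℝ 0 U) (hf : DifferentiableOn ℝ f U) {x : E} (hx : x ∈ U)
    {t : ℝ} (ht : t ∈ Ioo 0 1) :
    HasDerivAt (fun s : ℝ ↦ f (s • x)) (fderivWithin ℝ f U (t • x) x) t := by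
  have hmaps := mapsTo_smul_Icc_of_starConvex hU hx
  have hray : HasDerivWithinAt (fun s : ℝ ↦ s • x) x (Icc 0 1) t := by
    simpa using (hasDerivWithinAt_id t _).smul_const x
  have hfd := (hf _ (hmaps (Ioo_subset_Icc_self ht))).hasFDerivWithinAt
  exact (hfd.comp_hasDerivWithinAt t hray hmaps).hasDerivAt (Icc_mem_nhds ht.1 ht.2)

theorem transport_equation_solution_formula_general {E F : Type*}
    [NormedAddCommGroup E] [NormedSpace ℝ E]
    [NormedAddCommGroup F] [NormedSpace ℝ F] [CompleteSpace F]
    {U : Set E} (hU : StarConvex ℝ 0 U) {j : ℝ} (hj : 0 < j)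
    {ρ : E → ℝ} (hρ : DifferentiableOn ℝ ρ U) (hρ0 : ∀ x ∈ U, ρ x ≠ 0)
    {g : E → F} (hg : ContinuousOn g U) {f : E → F} (hf : DifferentiableOn ℝ f U)
    (hode : ∀ x ∈ U,
      fderivWithin ℝ f U x x + (j + (ρ x)⁻¹ * fderivWithin ℝ ρ U x x) • f x = g x)
    {x : E} (hx : x ∈ U) :
    f x = (ρ x)⁻¹ • ∫ t in (0 : ℝ)..1, (t ^ (j - 1) * ρ (t • x)) • g (t • x) := by
  have hray : ∀ t ∈ Ioo (0 : ℝ) 1, t • x ∈ U := fun t ht ↦ hU.smul_mem hx ht.1.le ht.2.le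
  have hint : ((1 : ℝ) ^ j * ρ ((1 : ℝ) • x)) • f ((1 : ℝ) • x) =
      ∫ t in (0 : ℝ)..1, (t ^ (j - 1) * ρ (t • x)) • g (t • x) :=
    rpow_mul_smul_eq_integral hj zero_le_one
      (continuousOn_comp_smul_of_starConvex hU hρ.continuousOn hx)
      (fun _ ↦ hasDerivAt_comp_smul_of_starConvex hU hρ hx)
      (fun t ht ↦ hρ0 _ (hray t ht))
      (continuousOn_comp_smul_of_starConvex hU hf.continuousOn hx)
      (fun _ ↦ hasDerivAt_comp_smul_of_starConvex hU hf hx)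
      (continuousOn_comp_smul_of_starConvex hU hg hx)
      (fun t ht ↦ by simpa only [map_smul, smul_eq_mul] using hode _ (hray t ht))
  rw [← hint, Real.one_rpow, one_mul, one_smul, inv_smul_smul₀ (hρ0 x hx)]

lemma fderivWithin_self_eq_sum_smul_single {𝕜 ι F : Type*} [RCLike 𝕜] [Fintype ι] [DecidableEq ι]
    [NormedAddCommGroup F] [NormedSpace 𝕜 F] {U : Set (EuclideanSpace 𝕜 ι)} (hU : IsOpen U)
    {x : EuclideanSpace 𝕜 ι} (hx : x ∈ U) (f : EuclideanSpace 𝕜 ι → F) :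
    fderivWithin 𝕜 f U x x = ∑ i, x i • fderiv 𝕜 f x (EuclideanSpace.single i 1) := by
  rw [fderivWithin_of_isOpen hU hx]
  conv_lhs => arg 2; rw [← (EuclideanSpace.basisFun ι 𝕜).sum_repr x]
  simp only [map_sum, map_smul, EuclideanSpace.basisFun_repr, EuclideanSpace.basisFun_apply]

/-- solution formula for the transport equation along radial rays. If `U ⊆ ℝⁿ` is
open and star-shaped about `0`, `ρ` is `C¹` and positive, `g` continuous, `f` is `C¹`, and
`Σᵢ xᵢ ∂ᵢf(x) + (j + ρ(x)⁻¹ Σᵢ xᵢ ∂ᵢρ(x))·f(x) = g(x)` on `U`, then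
`f(x) = ρ(x)⁻¹ ∫₀¹ t^(j−1) ρ(tx) g(tx) dt` on `U`. -/
theorem transport_equation_solution_formula
    (n : ℕ) (hn : 1 ≤ n) (U : Set (EuclideanSpace ℝ (Fin n)))
    (hU : IsOpen U) (hstar : ∀ x ∈ U, ∀ t ∈ Icc (0 : ℝ) 1, t • x ∈ U)
    (j : ℕ) (hj : 1 ≤ j)
    (ρ : EuclideanSpace ℝ (Fin n) → ℝ) (hρ : ContDiffOn ℝ 1 ρ U)
    (hρpos : ∀ x ∈ U, 0 < ρ x)
    (g : EuclideanSpace ℝ (Fin n) → ℂ) (hg : ContinuousOn g U)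
    (f : EuclideanSpace ℝ (Fin n) → ℂ) (hf : ContDiffOn ℝ 1 f U)
    (hode : ∀ x ∈ U,
      (∑ i : Fin n, (x i : ℂ) * fderiv ℝ f x (EuclideanSpace.single i (1 : ℝ))) +
        ((j : ℂ) + (((ρ x)⁻¹ *
            ∑ i : Fin n, x i * fderiv ℝ ρ x (EuclideanSpace.single i (1 : ℝ)) : ℝ) : ℂ)) * f x
        = g x) :
    ∀ x ∈ U, f x = (((ρ x)⁻¹ : ℝ) : ℂ) *
      ∫ t in Ioc (0 : ℝ) 1, ((t ^ (j - 1) * ρ (t • x) : ℝ) : ℂ) * g (t • x) := by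
  intro x hx
  have hstarConvex : StarConvex ℝ 0 U :=
    starConvex_zero_iff.2 fun y hy t ht0 ht1 ↦ hstar y hy t ⟨ht0, ht1⟩
  have hradial : ∀ y ∈ U,
      fderivWithin ℝ f U y y + ((j : ℝ) + (ρ y)⁻¹ * fderivWithin ℝ ρ U y y) • f y = g y := by
    intro y hy
    simpa only [fderivWithin_self_eq_sum_smul_single hU hy, smul_eq_mul, Complex.real_smul,
      Complex.ofReal_add, Complex.ofReal_natCast] using hode y hy
  have hpow (t : ℝ) : t ^ ((j : ℝ) - 1) = t ^ (j - 1) := by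
    rw [← Nat.cast_pred hj, Real.rpow_natCast]
  simpa only [hpow, Complex.real_smul, intervalIntegral.integral_of_le zero_le_one] using
    transport_equation_solution_formula_general hstarConvex (Nat.cast_pos.2 hj)
      (hρ.differentiableOn one_ne_zero) (fun y hy ↦ (hρpos y hy).ne') hg
      (hf.differentiableOn one_ne_zero) hradial hx
end

section
/- Let (V, ⟨·,·⟩) be a finite-dimensional real inner product space and let B : V × V × V → ℝ be an alternating trilinear form. Let B_o : V → End(V) be the (unique) map with ⟨B_o(X)Y, Z⟩ = 2·B(X,Y,Z) for all X, Y, Z ∈ V. Then for all W, X, Y, Z ∈ V: ⟨(B_o(W)∘B_o(X) − B_o(X)∘B_o(W))(Y), Z⟩ = ⟨(B_o(Y)∘B_o(Z) − B_o(Z)∘B_o(Y))(W), X⟩. Equivalently, the End(V)-valued alternating 2-form B_o²(X,Y) := [B_o(X), B_o(Y)] satisfies (B_o²)^⊤ = B_o², where for an End(V)-valued 2-form A the 2-form A^⊤ is defined by ⟨A^⊤(X,Y)Z, W⟩ = ⟨A(Z,W)X, Y⟩. -/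
open RealInnerProductSpace

/-!
Since `B` is alternating, each `Bo X` is skew-adjoint, so
`⟪[Bo W, Bo X] Y, Z⟫ = ⟪Bo W Y, Bo X Z⟫ - ⟪Bo X Y, Bo W Z⟫`. By symmetry of the inner product and
antisymmetry of `Bo X Y` in `X` and `Y`, used in both slots at once, the right-hand side is
unchanged under `(W, X, Y, Z) ↦ (Y, Z, W, X)`.
-/

section AlternatingSwap

variable {R M N : Type*} [Semiring R] [AddCommMonoid M] [Module R M] [AddCommGroup N] [Module R N]

theorem alternatingMap_swap_zero_one {n : ℕ} (ω : M [⋀^Fin (n + 2)]→ₗ[R] N) (x y : M)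
    (v : Fin n → M) :
    ω (Matrix.vecCons y (Matrix.vecCons x v)) = -ω (Matrix.vecCons x (Matrix.vecCons y v)) := by
  rw [← ω.map_swap _ zero_ne_one, Matrix.cons_cons_comp_swap_zero_one]

theorem alternatingMap_swap_one_two (ω : M [⋀^Fin 3]→ₗ[R] N) (x y z : M) :
    ω ![x, z, y] = -ω ![x, y, z] := by
  have swap_eq : ![x, y, z] ∘ Equiv.swap 1 2 = ![x, z, y] := by
    ext i
    fin_cases i <;> rfl
  rw [← ω.map_swap _ (by decide : (1 : Fin 3) ≠ 2), swap_eq]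

end AlternatingSwap

section SymmetricForm

variable {R M : Type*} [CommRing R] [AddCommGroup M] [Module R M] {g : LinearMap.BilinForm R M}

theorem form_commutator_apply_of_isSkewAdjoint {S T : Module.End R M}
    (hS : g.IsSkewAdjoint S) (hT : g.IsSkewAdjoint T) (y z : M) :
    g ((S ∘ₗ T - T ∘ₗ S) y) z = g (S y) (T z) - g (T y) (S z) := by
  have hST : g (S (T y)) z = -g (T y) (S z) := by simpa using hS (T y) z
  have hTS : g (T (S y)) z = -g (S y) (T z) := by simpa using hT (S y) z
  simp only [LinearMap.sub_apply, LinearMap.comp_apply, map_sub, hST, hTS]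
  ring

variable {ω : M [⋀^Fin 3]→ₗ[R] R} {A : M → Module.End R M}

theorem isSkewAdjoint_of_form_eq_alternating (hg : g.IsSymm)
    (hA : ∀ x y z, g (A x y) z = ω ![x, y, z]) (x : M) : g.IsSkewAdjoint (A x) := by
  intro y z
  calc
    g (A x y) z = -g (A x z) y := by rw [hA, hA, alternatingMap_swap_one_two]
    _ = g y (-A x z) := by rw [hg.eq, map_neg]

-- Stated after pairing with `g`: `A y x = -A x y` itself can fail when `g` is degenerate.
theorem form_apply_swap_of_form_eq_alternating (hA : ∀ x y z, g (A x y) z = ω ![x, y, z])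
    (x y : M) : g (A y x) = -g (A x y) := by
  ext z
  rw [LinearMap.neg_apply, hA, hA, alternatingMap_swap_zero_one]

theorem form_apply_apply_swap_of_form_eq_alternating (hg : g.IsSymm)
    (hA : ∀ x y z, g (A x y) z = ω ![x, y, z]) (w x y z : M) :
    g (A y w) (A z x) = g (A w y) (A x z) := by
  have swap := form_apply_swap_of_form_eq_alternating hA
  calc
    g (A y w) (A z x) = -g (A z x) (A w y) := by rw [swap w y, LinearMap.neg_apply, hg.eq]
    _ = g (A w y) (A x z) := by rw [swap x z, LinearMap.neg_apply, neg_neg, hg.eq]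

theorem Bo_squared_transpose_symmetric_general (hg : g.IsSymm)
    (hA : ∀ x y z, g (A x y) z = ω ![x, y, z]) (w x y z : M) :
    g ((A w ∘ₗ A x - A x ∘ₗ A w) y) z = g ((A y ∘ₗ A z - A z ∘ₗ A y) w) x := by
  have skew := isSkewAdjoint_of_form_eq_alternating hg hA
  have swap := form_apply_apply_swap_of_form_eq_alternating hg hA
  calc
    g ((A w ∘ₗ A x - A x ∘ₗ A w) y) z = g (A w y) (A x z) - g (A x y) (A w z) :=
      form_commutator_apply_of_isSkewAdjoint (skew w) (skew x) y z
    _ = g (A y w) (A z x) - g (A z w) (A y x) := by rw [swap w x y z, swap w x z y, hg.eq (A x y)]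
    _ = g ((A y ∘ₗ A z - A z ∘ₗ A y) w) x :=
      (form_commutator_apply_of_isSkewAdjoint (skew y) (skew z) w x).symm

end SymmetricForm

/-- For an alternating trilinear form `B` on a finite-dimensional real inner
product space, with `B_o` determined by `⟪B_o(X)Y, Z⟫ = 2B(X,Y,Z)`, the `End(V)`-valued
2-form `B_o²(X,Y) = [B_o(X), B_o(Y)]` satisfies `(B_o²)^⊤ = B_o²`. -/
theorem Bo_squared_transpose_symmetric
    (V : Type*) [NormedAddCommGroup V] [InnerProductSpace ℝ V] [FiniteDimensional ℝ V]
    (B : AlternatingMap ℝ V ℝ (Fin 3))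
    (Bo : V →ₗ[ℝ] V →ₗ[ℝ] V)
    (hBo : ∀ X Y Z : V, ⟪Bo X Y, Z⟫ = 2 * B ![X, Y, Z]) :
    ∀ W X Y Z : V,
      ⟪(Bo W ∘ₗ Bo X - Bo X ∘ₗ Bo W) Y, Z⟫ =
        ⟪(Bo Y ∘ₗ Bo Z - Bo Z ∘ₗ Bo Y) W, X⟫ :=
  Bo_squared_transpose_symmetric_general (g := innerₗ V) (ω := (2 : ℝ) • B) (A := Bo)
    ⟨fun X Y ↦ real_inner_comm Y X⟩ hBo
end

section
/- Let (V, ⟨·,·⟩) be a finite-dimensional real inner product space and let C be a linear map assigning to each W ∈ V an alternating trilinear form C_W on V. Define the 4-linear form ν by ν(W,X,Y,Z) = C_W(X,Y,Z) − C_X(W,Y,Z) + C_Y(W,X,Z) − C_Z(W,X,Y); for each W let (C_W)_o : V → End(V) be determined by ⟨(C_W)_o(X)Y, Z⟩ = 2·C_W(X,Y,Z); define the End(V)-valued 2-form D by D(W,X) = (C_W)_o(X) − (C_X)_o(W); and define ν_o by ⟨ν_o(W,X)Y, Z⟩ = 2·ν(W,X,Y,Z). Then for all W, X, Y, Z ∈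 V: ⟨ν_o(W,X)Y, Z⟩ = ⟨D(W,X)Y, Z⟩ + ⟨D(Y,Z)W, X⟩; that is, ν_o = D + D^⊤, where ⟨D^⊤(W,X)Y, Z⟩ = ⟨D(Y,Z)W, X⟩. -/
open RealInnerProductSpace

section AlternatingMap

variable {R M N : Type*} [Semiring R] [AddCommMonoid M] [Module R M] [AddCommGroup N] [Module R N]

theorem alternatingMap_comp_finRotate_of_odd {n : ℕ} (hn : Odd n) (f : M [⋀^Fin n]→ₗ[R] N)
    (v : Fin n → M) : f (v ∘ finRotate n) = f v := by
  obtain ⟨k, rfl⟩ := hn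
  rw [f.map_perm, sign_finRotate, Nat.add_sub_cancel, (even_two_mul k).neg_one_pow, one_smul]

theorem alternatingMap_vec3_rotate (f : M [⋀^Fin 3]→ₗ[R] N) (x y z : M) :
    f ![y, z, x] = f ![x, y, z] := by
  have rotate_vec : ![x, y, z] ∘ finRotate 3 = ![y, z, x] := by
    ext i
    fin_cases i <;> rfl
  rw [← rotate_vec, alternatingMap_comp_finRotate_of_odd (by decide)]

/-- With `D(W, X, Y, Z) = C_W(X, Y, Z) - C_X(W, Y, Z)`, the right-hand side is
`D(W, X, Y, Z) + D(Y, Z, W, X)`: a 3-cycle is even, so it moves the displaced argument of each of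
the last two terms to the front without a sign. -/
theorem alternatingMap_antisymmetrization_eq_add_pair_swap (C : M → M [⋀^Fin 3]→ₗ[R] N)
    (W X Y Z : M) :
    C W ![X, Y, Z] - C X ![W, Y, Z] + C Y ![W, X, Z] - C Z ![W, X, Y] =
      (C W ![X, Y, Z] - C X ![W, Y, Z]) + (C Y ![Z, W, X] - C Z ![Y, W, X]) := by
  rw [← alternatingMap_vec3_rotate (C Y) Z W X, ← alternatingMap_vec3_rotate (C Z) Y W X,
    add_sub_assoc]

end AlternatingMap

section InnerProductSpace

variable {V : Type*} [SeminormedAddCommGroup V] [InnerProductSpace ℝ V]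
  {C : V → V [⋀^Fin 3]→ₗ[ℝ] ℝ} {Co : V → V → V → V}

theorem inner_sub_swap_eq_two_mul (hCo : ∀ W X Y Z : V, ⟪Co W X Y, Z⟫ = 2 * C W ![X, Y, Z])
    (W X Y Z : V) :
    ⟪Co W X Y - Co X W Y, Z⟫ = 2 * (C W ![X, Y, Z] - C X ![W, Y, Z]) := by
  rw [inner_sub_left, hCo, hCo, mul_sub]

theorem nu_o_eq_D_add_D_transpose_general
    (hCo : ∀ W X Y Z : V, ⟪Co W X Y, Z⟫ = 2 * C W ![X, Y, Z]) (W X Y Z : V) :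
    2 * (C W ![X, Y, Z] - C X ![W, Y, Z] + C Y ![W, X, Z] - C Z ![W, X, Y]) =
      ⟪Co W X Y - Co X W Y, Z⟫ + ⟪Co Y Z W - Co Z Y W, X⟫ := by
  rw [alternatingMap_antisymmetrization_eq_add_pair_swap, mul_add,
    inner_sub_swap_eq_two_mul hCo, inner_sub_swap_eq_two_mul hCo]

end InnerProductSpace

/-- pointwise form of `(dB)_o = d_{∇}B_o + (d_{∇}B_o)^⊤`. Given a linear map
`C` assigning to each `W` an alternating trilinear form `C_W`, with `(C_W)_o` determined by
`⟪(C_W)_o(X)Y, Z⟫ = 2 C_W(X,Y,Z)`, the 4-linear antisymmetrization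
`ν(W,X,Y,Z) = C_W(X,Y,Z) − C_X(W,Y,Z) + C_Y(W,X,Z) − C_Z(W,X,Y)` satisfies
`ν_o = D + D^⊤` where `D(W,X) = (C_W)_o(X) − (C_X)_o(W)`. -/
theorem nu_o_eq_D_add_D_transpose
    (V : Type*) [NormedAddCommGroup V] [InnerProductSpace ℝ V] [FiniteDimensional ℝ V]
    (C : V →ₗ[ℝ] AlternatingMap ℝ V ℝ (Fin 3))
    (Co : V → V → V → V)
    (hCo : ∀ W X Y Z : V, ⟪Co W X Y, Z⟫ = 2 * C W ![X, Y, Z]) :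
    ∀ W X Y Z : V,
      2 * (C W ![X, Y, Z] - C X ![W, Y, Z] + C Y ![W, X, Z] - C Z ![W, X, Y]) =
        ⟪Co W X Y - Co X W Y, Z⟫ + ⟪Co Y Z W - Co Z Y W, X⟫ :=
  nu_o_eq_D_add_D_transpose_general hCo
end

section
/- Let (V, ⟨·,·⟩) be a 4-dimensional real inner product space, let A : V × V → End(V) be an alternating bilinear map such that each A(X,Y) is skew-adjoint, and let ν be an alternating 4-linear form on V. Let ν_o be determined by ⟨ν_o(X,Y)Z, W⟩ = 2·ν(X,Y,Z,W), and define the trace-wedge 4-form tr(A∧ν_o) on vectors X₁,…,X₄ by (1/4)·Σ_{σ∈S₄} sgn(σ)·tr( A(X_{σ(1)},X_{σ(2)}) ∘ ν_o(X_{σ(3)},X_{σ(4)}) ). Then tr(A∧ν_o) = 2·κ_A·ν, where κ_A = Σ_{a,b=1}^{4} ⟨A(e_a,e_b)e_b, e_a⟩ for any orthonormal basis e₁,…,e₄ of V. -/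
open RealInnerProductSpace

/-!
In dimension `n + 2`, a top-degree form `ν` gives an endomorphism-valued `n`-form `ν_o` with
`⟪ν_o(Y)Z, W⟫ = 2ν(Z, W, Y)`; moving the pair `Z, W` past `Y` costs no sign. Both sides of the
identity are top-degree forms, so they only need to be compared on an orthonormal basis `e`.

For a skew-adjoint `B` and `f = e ∘ σ`, the trace of `B ∘ ν_o(f₂, …)` is
`-2 ∑_{c,d} ⟪B f_c, f_d⟫ ν(f_c, f_d, f₂, …)`. Only `{c, d} = {0, 1}` contributes, and the two terms
agree, giving `4 ⟪B f₁, f₀⟫ ν(f)`. With `B = A(f₀, f₁)` the sign of `σ` cancels against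
`ν(f) = sgn(σ) ν(e)`, and each ordered pair of distinct indices is `(σ 0, σ 1)` for exactly `n!`
permutations `σ`, so that the double trace of `A` appears.
-/

open Matrix (vecCons)
open scoped Nat

section PermSums

variable {M : Type*} [AddCommMonoid M] {n : ℕ}

theorem sum_perm_apply_zero (f : Fin (n + 1) → M) :
    ∑ σ : Equiv.Perm (Fin (n + 1)), f (σ 0) = n ! • ∑ a, f a := by
  rw [← Equiv.Perm.decomposeFin.symm.sum_comp, Fintype.sum_prod_type]
  simp [Finset.smul_sum, Fintype.card_perm]

theorem sum_perm_apply_zero_one (K : Fin (n + 2) → Fin (n + 2) → M) (hK : ∀ a, K a a = 0) :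
    ∑ σ : Equiv.Perm (Fin (n + 2)), K (σ 0) (σ 1) = n ! • ∑ a, ∑ b, K a b := by
  -- `decomposeFin` writes `σ` as `swap 0 a` after a permutation fixing `0`, where `a = σ 0`.
  rw [← Equiv.Perm.decomposeFin.symm.sum_comp, Fintype.sum_prod_type, Finset.smul_sum]
  refine Finset.sum_congr rfl fun a _ => ?_
  simp only [Equiv.Perm.decomposeFin_symm_apply_zero, Equiv.Perm.decomposeFin_symm_apply_one]
  rw [sum_perm_apply_zero fun b => K a (Equiv.swap 0 a b.succ),
    ← Equiv.sum_comp (Equiv.swap 0 a) (K a), Fin.sum_univ_succ fun b => K a (Equiv.swap 0 a b),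
    Equiv.swap_apply_left, hK, zero_add]

end PermSums

section Alternating

variable {R M N : Type*} [Ring R] [AddCommMonoid M] [Module R M] [AddCommGroup N] [Module R N]
  {n : ℕ}

theorem alternating_vecCons_vecCons_eq_zero (ν : M [⋀^Fin (n + 2)]→ₗ[R] N)
    (v : Fin (n + 2) → M) {c d : Fin (n + 2)} (h01 : (c, d) ≠ (0, 1)) (h10 : (c, d) ≠ (1, 0)) :
    ν (vecCons (v c) (vecCons (v d) fun i => v i.succ.succ)) = 0 := by
  have hcases (a : Fin (n + 2)) : a = 0 ∨ a = 1 ∨ ∃ i : Fin n, a = i.succ.succ :=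
    Fin.cases (.inl rfl) (Fin.cases (.inr (.inl rfl)) fun i => .inr (.inr ⟨i, rfl⟩)) a
  have hrep : c = d ∨ (∃ i : Fin n, c = i.succ.succ) ∨ ∃ i : Fin n, d = i.succ.succ := by
    rcases hcases c with rfl | rfl | hc <;> rcases hcases d with rfl | rfl | hd <;> simp_all
  obtain rfl | ⟨i, rfl⟩ | ⟨i, rfl⟩ := hrep
  · exact ν.map_eq_zero_of_eq _ (i := 0) (j := 1) rfl (by simp)
  · exact ν.map_eq_zero_of_eq _ (i := 0) (j := i.succ.succ) rfl (Fin.succ_ne_zero _).symm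
  · exact ν.map_eq_zero_of_eq _ (i := 1) (j := i.succ.succ) rfl (by simp [Fin.ext_iff])

theorem alternating_vecCons_one_vecCons_zero (ν : M [⋀^Fin (n + 2)]→ₗ[R] N)
    (v : Fin (n + 2) → M) :
    ν (vecCons (v 1) (vecCons (v 0) fun i => v i.succ.succ)) = -ν v := by
  have hswap : vecCons (v 1) (vecCons (v 0) fun i => v i.succ.succ) = v ∘ Equiv.swap 0 1 := by
    refine funext (Fin.cases (by simp) (Fin.cases (by simp) fun i => ?_))
    rw [Function.comp_apply, Equiv.swap_apply_of_ne_of_ne (by simp) (by simp [Fin.ext_iff])]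
    rfl
  rw [hswap, ν.map_swap v (by simp)]

theorem sum_sum_smul_alternating_vecCons_vecCons (g : Fin (n + 2) → Fin (n + 2) → R)
    (ν : M [⋀^Fin (n + 2)]→ₗ[R] N) (v : Fin (n + 2) → M) :
    ∑ c, ∑ d, g c d • ν (vecCons (v c) (vecCons (v d) fun i => v i.succ.succ)) =
      (g 0 1 - g 1 0) • ν v := by
  have hid : vecCons (v 0) (vecCons (v 1) fun i => v i.succ.succ) = v :=
    funext (Fin.cases rfl (Fin.cases rfl fun _ => rfl))
  have hzero (p : Fin (n + 2) × Fin (n + 2)) (hp : p ≠ (0, 1) ∧ p ≠ (1, 0)) :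
      g p.1 p.2 • ν (vecCons (v p.1) (vecCons (v p.2) fun i => v i.succ.succ)) = 0 := by
    rw [alternating_vecCons_vecCons_eq_zero ν v hp.1 hp.2, smul_zero]
  rw [← Fintype.sum_prod_type', Fintype.sum_eq_add (0, 1) (1, 0) (by simp) hzero, hid,
    alternating_vecCons_one_vecCons_zero, smul_neg, sub_smul, sub_eq_add_neg]

theorem alternating_vecCons_vecCons_fin_two (ν : M [⋀^Fin 4]→ₗ[R] N) (Z W : M)
    (Y : Fin 2 → M) : ν (vecCons Z (vecCons W Y)) = ν ![Y 0, Y 1, Z, W] := by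
  have hrotate : vecCons Z (vecCons W Y) =
      ![Y 0, Y 1, Z, W] ∘ (finRotate 4 ^ 2 : Equiv.Perm (Fin 4)) := by
    ext i
    fin_cases i <;> rfl
  rw [hrotate, ν.map_perm, map_pow, Int.units_sq, one_smul]

end Alternating

theorem alternatingMap_eq_of_basis_eq {R M ι : Type*} [CommRing R] [AddCommGroup M] [Module R M]
    [Finite ι] (b : Module.Basis ι R M) {f g : M [⋀^ι]→ₗ[R] R} (h : f b = g b) : f = g :=
  sub_eq_zero.mp <| ((f - g).map_basis_eq_zero_iff b).mp <| by simp [h]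

section TraceComp

variable {R M : Type*} [CommSemiring R] [AddCommMonoid M] [Module R M] {n : ℕ}

/-- The multilinear form `(X₀, …, X_{n+1}) ↦ tr(A(X₀, X₁) ∘ F(X₂, …, X_{n+1}))`. Its
alternatization is `2 · n!` times the trace-wedge form `tr(A ∧ F)`. -/
noncomputable def traceCompForm (A : M →ₗ[R] M →ₗ[R] M →ₗ[R] M)
    (F : MultilinearMap R (fun _ : Fin n => M) (M →ₗ[R] M)) :
    MultilinearMap R (fun _ : Fin (n + 2) => M) R :=
  MultilinearMap.mk'
    (fun X => LinearMap.trace R M (A (X 0) (Fin.tail X 0) ∘ₗ F (Fin.tail (Fin.tail X))))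
    (fun X i x y => by
      cases i using Fin.cases with
      | zero => simp [LinearMap.add_comp]
      | succ i =>
        -- `Fin.tail_update_succ` only fires while `Fin.succ 0` is not normalized to `1`.
        cases i using Fin.cases <;>
          simp [-Fin.succ_zero_eq_one, -Fin.succ_zero_eq_one', (Fin.succ_ne_zero _).symm,
            LinearMap.add_comp, LinearMap.comp_add])
    (fun X i r x => by
      cases i using Fin.cases with
      | zero => simp [LinearMap.smul_comp]
      | succ i =>
        cases i using Fin.cases <;>
          simp [-Fin.succ_zero_eq_one, -Fin.succ_zero_eq_one', (Fin.succ_ne_zero _).symm,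
            LinearMap.smul_comp, LinearMap.comp_smul])

theorem traceCompForm_apply (A : M →ₗ[R] M →ₗ[R] M →ₗ[R] M)
    (F : MultilinearMap R (fun _ : Fin n => M) (M →ₗ[R] M)) (X : Fin (n + 2) → M) :
    traceCompForm A F X =
      LinearMap.trace R M (A (X 0) (X 1) ∘ₗ F fun i => X i.succ.succ) :=
  rfl

end TraceComp

section InnerProduct

variable {V : Type*} [NormedAddCommGroup V] [InnerProductSpace ℝ V]

theorem trace_comp_eq_neg_sum_inner_mul_inner {ι : Type*} [Fintype ι]
    (f : OrthonormalBasis ι ℝ V) (B C : V →ₗ[ℝ] V) (hB : ∀ Z W : V, ⟪B Z, W⟫ = -⟪B W, Z⟫) :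
    LinearMap.trace ℝ V (B ∘ₗ C) = -∑ c, ∑ d, ⟪B (f c), f d⟫ * ⟪C (f c), f d⟫ := by
  rw [LinearMap.trace_eq_sum_inner _ f, ← Finset.sum_neg_distrib]
  refine Finset.sum_congr rfl fun c _ => ?_
  rw [real_inner_comm, LinearMap.comp_apply, hB, ← f.sum_inner_mul_inner]
  simp only [real_inner_comm]

variable {n : ℕ}

theorem trace_comp_of_inner_eq_alternating (B C : V →ₗ[ℝ] V)
    (hB : ∀ Z W : V, ⟪B Z, W⟫ = -⟪B W, Z⟫) (ν : V [⋀^Fin (n + 2)]→ₗ[ℝ] ℝ)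
    (f : OrthonormalBasis (Fin (n + 2)) ℝ V)
    (hC : ∀ Z W : V, ⟪C Z, W⟫ = 2 * ν (vecCons Z (vecCons W fun i => f i.succ.succ))) :
    LinearMap.trace ℝ V (B ∘ₗ C) = 4 * ⟪B (f 1), f 0⟫ * ν f := by
  have hsum := sum_sum_smul_alternating_vecCons_vecCons (fun c d => ⟪B (f c), f d⟫ * 2) ν f
  simp only [smul_eq_mul, mul_assoc] at hsum
  simp only [trace_comp_eq_neg_sum_inner_mul_inner f B C hB, hC, hsum, hB (f 0) (f 1)]
  ring

theorem exists_multilinearMap_of_inner_eq {ι M U : Type*} [AddCommMonoid M]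
    [Module ℝ M] [AddCommMonoid U] [Module ℝ U] (F : (ι → M) → U →ₗ[ℝ] V)
    (Φ : U → V → MultilinearMap ℝ (fun _ : ι => M) ℝ) (hF : ∀ Y Z W, ⟪F Y Z, W⟫ = Φ Z W Y) :
    ∃ G : MultilinearMap ℝ (fun _ : ι => M) (U →ₗ[ℝ] V), ⇑G = F := by
  classical
  refine ⟨MultilinearMap.mk' F (fun Y i x y => ?_) (fun Y i r x => ?_), rfl⟩ <;>
    refine LinearMap.ext fun Z => ext_inner_right ℝ fun W => ?_
  · simp only [LinearMap.add_apply, inner_add_left, hF, MultilinearMap.map_update_add]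
  · simp only [LinearMap.smul_apply, real_inner_smul_left, hF, MultilinearMap.map_update_smul,
      smul_eq_mul]

theorem alternatization_traceCompForm_orthonormalBasis
    (A : V →ₗ[ℝ] V →ₗ[ℝ] V →ₗ[ℝ] V) (hAskew : ∀ X Y Z W : V, ⟪A X Y Z, W⟫ = -⟪A X Y W, Z⟫)
    (ν : V [⋀^Fin (n + 2)]→ₗ[ℝ] ℝ) (F : MultilinearMap ℝ (fun _ : Fin n => V) (V →ₗ[ℝ] V))
    (hF : ∀ Y Z W, ⟪F Y Z, W⟫ = 2 * ν (vecCons Z (vecCons W Y)))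
    (e : OrthonormalBasis (Fin (n + 2)) ℝ V) :
    (traceCompForm A F).alternatization e =
      4 * n ! * (∑ a, ∑ b, ⟪A (e a) (e b) (e b), e a⟫) * ν e := by
  have hterm (σ : Equiv.Perm (Fin (n + 2))) :
      Equiv.Perm.sign σ • traceCompForm A F (e ∘ σ) =
        ⟪A (e (σ 0)) (e (σ 1)) (e (σ 1)), e (σ 0)⟫ * (4 * ν e) := by
    have htrace : traceCompForm A F (e ∘ σ) =
        4 * ⟪A (e (σ 0)) (e (σ 1)) (e (σ 1)), e (σ 0)⟫ * ν (e ∘ σ) := by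
      simpa [traceCompForm_apply] using trace_comp_of_inner_eq_alternating _ _
        (hAskew (e (σ 0)) (e (σ 1))) ν (e.reindex σ.symm) (hF _)
    rw [htrace, ν.map_perm, mul_smul_comm, smul_smul, Int.units_mul_self, one_smul]
    ring
  have hdiag (a : Fin (n + 2)) : ⟪A (e a) (e a) (e a), e a⟫ = 0 :=
    self_eq_neg.mp (hAskew _ _ _ _)
  rw [MultilinearMap.alternatization_apply]
  refine (Finset.sum_congr rfl fun σ _ => hterm σ).trans ?_
  rw [← Finset.sum_mul, sum_perm_apply_zero_one (fun a b => ⟪A (e a) (e b) (e b), e a⟫) hdiag,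
    nsmul_eq_mul]
  ring

end InnerProduct

theorem trace_wedge_A_nu_o_eq_two_kappa_nu_general {n : ℕ}
    {V : Type*} [NormedAddCommGroup V] [InnerProductSpace ℝ V]
    (A : V →ₗ[ℝ] V →ₗ[ℝ] V →ₗ[ℝ] V)
    (hAskew : ∀ X Y Z W : V, ⟪A X Y Z, W⟫ = -⟪A X Y W, Z⟫)
    (ν : V [⋀^Fin (n + 2)]→ₗ[ℝ] ℝ)
    (νo : (Fin n → V) → V →ₗ[ℝ] V)
    (hνo : ∀ Y Z W, ⟪νo Y Z, W⟫ = 2 * ν (vecCons Z (vecCons W Y)))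
    (e : OrthonormalBasis (Fin (n + 2)) ℝ V) (X : Fin (n + 2) → V) :
    (1 / (2 * n !) : ℝ) * ∑ σ : Equiv.Perm (Fin (n + 2)),
        ((Equiv.Perm.sign σ : ℤ) : ℝ) *
          LinearMap.trace ℝ V (A (X (σ 0)) (X (σ 1)) ∘ₗ νo fun i => X (σ i.succ.succ)) =
      2 * (∑ a, ∑ b, ⟪A (e a) (e b) (e b), e a⟫) * ν X := by
  obtain ⟨F, rfl⟩ := exists_multilinearMap_of_inner_eq νo
    (fun Z W => 2 • ((ν.curryLeft Z).curryLeft W).toMultilinearMap)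
    (fun Y Z W => by simp [hνo, vecCons])
  set κ := ∑ a, ∑ b, ⟪A (e a) (e b) (e b), e a⟫
  have hforms : (traceCompForm A F).alternatization = (4 * n ! * κ) • ν :=
    alternatingMap_eq_of_basis_eq e.toBasis <| by
      simpa using alternatization_traceCompForm_orthonormalBasis A hAskew ν F hνo e
  have hX := DFunLike.congr_fun hforms X
  simp only [MultilinearMap.alternatization_apply, MultilinearMap.domDomCongr_apply,
    traceCompForm_apply, Units.smul_def, zsmul_eq_mul, AlternatingMap.smul_apply,
    smul_eq_mul] at hX
  rw [hX]
  field_simp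
  ring

/-- pointwise form of `tr(R^{LC}·(dB)_o) = 2κ·dB` in dimension 4. For an
alternating bilinear `End(V)`-valued form `A` with each `A(X,Y)` skew-adjoint, and an
alternating 4-form `ν` with `ν_o` determined by `⟪ν_o(X,Y)Z, W⟫ = 2ν(X,Y,Z,W)`, the 4-form
`tr(A∧ν_o)` equals `2·κ_A·ν`, where `κ_A = Σ_{a,b}⟪A(e_a,e_b)e_b, e_a⟫`. -/
theorem trace_wedge_A_nu_o_eq_two_kappa_nu
    (V : Type*) [NormedAddCommGroup V] [InnerProductSpace ℝ V]
    (hdim : Module.finrank ℝ V = 4)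
    (A : V →ₗ[ℝ] V →ₗ[ℝ] V →ₗ[ℝ] V)
    (hAalt : ∀ X : V, A X X = 0)
    (hAskew : ∀ X Y Z W : V, ⟪A X Y Z, W⟫ = -⟪A X Y W, Z⟫)
    (ν : AlternatingMap ℝ V ℝ (Fin 4))
    (νo : V → V → V →ₗ[ℝ] V)
    (hνo : ∀ X Y Z W : V, ⟪νo X Y Z, W⟫ = 2 * ν ![X, Y, Z, W])
    (e : OrthonormalBasis (Fin 4) ℝ V) :
    ∀ X : Fin 4 → V,
      (1 / 4 : ℝ) * ∑ σ : Equiv.Perm (Fin 4),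
          ((Equiv.Perm.sign σ : ℤ) : ℝ) *
            LinearMap.trace ℝ V (A (X (σ 0)) (X (σ 1)) ∘ₗ νo (X (σ 2)) (X (σ 3))) =
        2 * (∑ a : Fin 4, ∑ b : Fin 4, ⟪A (e a) (e b) (e b), e a⟫) * ν X := by
  intro X
  rw [show (1 / 4 : ℝ) = 1 / (2 * 2 !) by norm_num]
  exact trace_wedge_A_nu_o_eq_two_kappa_nu_general A hAskew ν (fun Y => νo (Y 0) (Y 1))
    (fun Y Z W => by rw [hνo, alternating_vecCons_vecCons_fin_two ν Z W Y]) e X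
end

section
/- Let (V, ⟨·,·⟩) be a 4-dimensional real inner product space and let ν be an alternating 4-linear form on V. Let ν_o be determined by ⟨ν_o(X,Y)Z, W⟩ = 2·ν(X,Y,Z,W). Then the 4-form tr(ν_o∧ν_o), defined on vectors X₁,…,X₄ by (1/4)·Σ_{σ∈S₄} sgn(σ)·tr( ν_o(X_{σ(1)},X_{σ(2)}) ∘ ν_o(X_{σ(3)},X_{σ(4)}) ), is identically zero. -/
open RealInnerProductSpace

/-!
The trace `tr(ν_o(X₀, X₁) ∘ ν_o(X₂, X₃))` is multilinear in `X`, so its alternating sum has to be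
checked only on four distinct vectors `a, b, c, d` of an orthogonal basis. There the trace is, up to
normalization by the `⟪e, e⟫`, the sum of `ν(a, b, e, e') ν(c, d, e', e)` over basis vectors
`e, e'`, and a nonzero summand would require `a, b, c, d, e, e'` to be six different basis vectors.
Thus the dimension may be as large as five. It may not be six: for
`ν = e¹ ∧ e² ∧ e⁵ ∧ e⁶ + e³ ∧ e⁴ ∧ e⁵ ∧ e⁶` the alternating sum at `(e₁, e₂, e₃, e₄)` is nonzero.
-/

section TraceWedge

variable {R V ι : Type*} [CommRing R] [AddCommGroup V] [Module R V]

/-- The multilinear form `X ↦ tr(A(X₀, X₁) ∘ C(X₂, X₃))` of two bilinear maps with values in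
endomorphisms. For `2`-forms `A` and `C` its alternatization is `4 tr(A ∧ C)`; leaving out the
factor `1 / 4` allows arbitrary coefficients. -/
noncomputable def traceComp (A C : V →ₗ[R] V →ₗ[R] Module.End R V) :
    MultilinearMap R (fun _ : Fin 4 => V) R :=
  MultilinearMap.mk' (fun X => LinearMap.trace R V (A (X 0) (X 1) ∘ₗ C (X 2) (X 3)))
    (fun X i Y Z => by
      fin_cases i <;> simp [Function.update, LinearMap.add_comp, LinearMap.comp_add])
    (fun X i c Y => by
      fin_cases i <;> simp [Function.update, LinearMap.smul_comp, LinearMap.comp_smul])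

lemma traceComp_apply (A C : V →ₗ[R] V →ₗ[R] Module.End R V) (X : Fin 4 → V) :
    traceComp A C X = LinearMap.trace R V (A (X 0) (X 1) ∘ₗ C (X 2) (X 3)) :=
  rfl

lemma alternatization_traceComp_apply (A C : V →ₗ[R] V →ₗ[R] Module.End R V) (X : Fin 4 → V) :
    MultilinearMap.alternatization (traceComp A C) X =
      ∑ σ : Equiv.Perm (Fin 4), ((Equiv.Perm.sign σ : ℤ) : R) *
        LinearMap.trace R V (A (X (σ 0)) (X (σ 1)) ∘ₗ C (X (σ 2)) (X (σ 3))) := by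
  simp only [MultilinearMap.alternatization_apply, MultilinearMap.domDomCongr_apply,
    traceComp_apply, Units.smul_def, zsmul_eq_mul]

lemma trace_comp_eq_sum_repr [Fintype ι] (e : Module.Basis ι R V) (f g : Module.End R V) :
    LinearMap.trace R V (f ∘ₗ g) = ∑ i, ∑ j, e.repr (f (e j)) i * e.repr (g (e i)) j := by
  classical
  rw [LinearMap.trace_eq_matrix_trace R e, LinearMap.toMatrix_comp e e e]
  simp only [Matrix.trace, Matrix.diag, Matrix.mul_apply, LinearMap.toMatrix_apply]

end TraceWedge

lemma add_two_le_card_of_injective {ι : Type*} [Fintype ι] {n : ℕ} {p : Fin n → ι}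
    (hp : Function.Injective p) {i j : ι} (hi : i ∉ Set.range p) (hj : j ∉ Set.range p)
    (hij : i ≠ j) : n + 2 ≤ Fintype.card ι := by
  have hcons : Function.Injective
      (Fin.cons i (Fin.cons j p : Fin (n + 1) → ι) : Fin (n + 2) → ι) := by
    simp [Fin.cons_injective_iff, Fin.range_cons, hp, hj, hij, hi, -Set.mem_range]
  simpa only [Fintype.card_fin] using Fintype.card_le_of_injective _ hcons

section RaisedForm

variable {R V ι : Type*} [CommRing R] [AddCommGroup V] [Module R V] {B : LinearMap.BilinForm R V}

lemma exists_bilinear_of_apply_eq_multilinear (hB : B.Nondegenerate)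
    {μ : MultilinearMap R (fun _ : Fin 4 => V) R} {F : V → V → Module.End R V}
    (hF : ∀ X Y Z W, B (F X Y Z) W = μ ![X, Y, Z, W]) :
    ∃ N : V →ₗ[R] V →ₗ[R] Module.End R V, ∀ X Y, N X Y = F X Y := by
  have hext {f g : Module.End R V} (h : ∀ Z W, B (f Z) W = B (g Z) W) : f = g :=
    LinearMap.ext fun Z => LinearMap.ker_eq_bot.1 hB.ker_eq_bot (LinearMap.ext (h Z))
  refine ⟨LinearMap.mk₂ R F (fun X X' Y => hext fun Z W => ?_) (fun c X Y => hext fun Z W => ?_)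
    (fun X Y Y' => hext fun Z W => ?_) (fun c X Y => hext fun Z W => ?_), fun X Y => rfl⟩ <;>
    simp only [hF, LinearMap.add_apply, LinearMap.smul_apply, map_add, map_smul]
  · exact μ.cons_add ![Y, Z, W] X X'
  · exact μ.cons_smul ![Y, Z, W] c X
  · exact (μ.curryLeft X).cons_add ![Z, W] Y Y'
  · exact (μ.curryLeft X).cons_smul ![Z, W] c Y

variable [IsDomain R]

lemma repr_eq_zero_of_iIsOrtho (hB : B.Nondegenerate) {e : Module.Basis ι R V}
    (he : B.iIsOrtho e) {x : V} {i : ι} (hx : B x (e i) = 0) : e.repr x i = 0 := by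
  have hdiag : B (e i) (e i) ≠ 0 := he.not_isOrtho_basis_self_of_nondegenerate hB i
  have hexpand : B x (e i) = e.repr x i * B (e i) (e i) := by
    conv_lhs => rw [← e.linearCombination_repr x]
    rw [Finsupp.linearCombination_apply, Finsupp.sum, map_sum, LinearMap.sum_apply,
      Finset.sum_eq_single i]
    · simp only [map_smul, LinearMap.smul_apply, smul_eq_mul]
    · intro j _ hj
      simp [LinearMap.BilinForm.iIsOrtho_def.1 he j i hj]
    · simp +contextual
  exact (mul_eq_zero.1 (hexpand ▸ hx)).resolve_right hdiag

variable [Fintype ι] {ν : V [⋀^Fin 4]→ₗ[R] R} {N : V →ₗ[R] V →ₗ[R] Module.End R V}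

lemma trace_comp_eq_zero_of_iIsOrtho (hB : B.Nondegenerate)
    (hN : ∀ X Y Z W, B (N X Y Z) W = ν ![X, Y, Z, W]) {e : Module.Basis ι R V}
    (he : B.iIsOrtho e) (hcard : Fintype.card ι ≤ 5) {p : Fin 4 → ι}
    (hp : Function.Injective p) :
    LinearMap.trace R V (N (e (p 0)) (e (p 1)) ∘ₗ N (e (p 2)) (e (p 3))) = 0 := by
  rw [trace_comp_eq_sum_repr e]
  refine Finset.sum_eq_zero fun i _ => Finset.sum_eq_zero fun j _ => ?_
  by_contra hne
  have hνleft : ν ![e (p 0), e (p 1), e j, e i] ≠ 0 := fun h =>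
    left_ne_zero_of_mul hne (repr_eq_zero_of_iIsOrtho hB he ((hN ..).trans h))
  have hνright : ν ![e (p 2), e (p 3), e i, e j] ≠ 0 := fun h =>
    right_ne_zero_of_mul hne (repr_eq_zero_of_iIsOrtho hB he ((hN ..).trans h))
  have hi : i ∉ Set.range p := by
    rintro ⟨k, rfl⟩
    fin_cases k
    · exact hνleft (ν.map_eq_zero_of_eq _ (i := 0) (j := 3) rfl (by decide))
    · exact hνleft (ν.map_eq_zero_of_eq _ (i := 1) (j := 3) rfl (by decide))
    · exact hνright (ν.map_eq_zero_of_eq _ (i := 0) (j := 2) rfl (by decide))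
    · exact hνright (ν.map_eq_zero_of_eq _ (i := 1) (j := 2) rfl (by decide))
  have hj : j ∉ Set.range p := by
    rintro ⟨k, rfl⟩
    fin_cases k
    · exact hνleft (ν.map_eq_zero_of_eq _ (i := 0) (j := 2) rfl (by decide))
    · exact hνleft (ν.map_eq_zero_of_eq _ (i := 1) (j := 2) rfl (by decide))
    · exact hνright (ν.map_eq_zero_of_eq _ (i := 0) (j := 3) rfl (by decide))
    · exact hνright (ν.map_eq_zero_of_eq _ (i := 1) (j := 3) rfl (by decide))
  have hij : i ≠ j := by
    rintro rfl
    exact hνleft (ν.map_eq_zero_of_eq _ (i := 2) (j := 3) rfl (by decide))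
  exact absurd (add_two_le_card_of_injective hp hi hj hij) (by omega)

lemma alternatization_traceComp_eq_zero_of_iIsOrtho (hB : B.Nondegenerate)
    (hN : ∀ X Y Z W, B (N X Y Z) W = ν ![X, Y, Z, W]) {e : Module.Basis ι R V}
    (he : B.iIsOrtho e) (hcard : Fintype.card ι ≤ 5) :
    MultilinearMap.alternatization (traceComp N N) = 0 := by
  refine Module.Basis.ext_alternating e fun p hp => ?_
  rw [alternatization_traceComp_apply, AlternatingMap.zero_apply]
  refine Finset.sum_eq_zero fun σ _ => ?_
  exact mul_eq_zero_of_right _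
    (trace_comp_eq_zero_of_iIsOrtho hB hN he hcard (hp.comp σ.injective))

end RaisedForm

lemma nondegenerate_innerₗ (V : Type*) [NormedAddCommGroup V] [InnerProductSpace ℝ V] :
    (innerₗ V).Nondegenerate :=
  ⟨fun X hX => inner_self_eq_zero.1 (hX X), fun X hX => inner_self_eq_zero.1 (hX X)⟩

theorem trace_wedge_nu_o_nu_o_eq_zero_general {K V : Type*} [Field K] [Invertible (2 : K)]
    [AddCommGroup V] [Module K V] [FiniteDimensional K V] (hdim : Module.finrank K V ≤ 5)
    {B : LinearMap.BilinForm K V} (hB : B.Nondegenerate) (hsymm : LinearMap.IsSymm B)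
    (ν : V [⋀^Fin 4]→ₗ[K] K) (νo : V → V → V →ₗ[K] V)
    (hνo : ∀ X Y Z W : V, B (νo X Y Z) W = ν ![X, Y, Z, W]) (X : Fin 4 → V) :
    ∑ σ : Equiv.Perm (Fin 4), ((Equiv.Perm.sign σ : ℤ) : K) *
      LinearMap.trace K V (νo (X (σ 0)) (X (σ 1)) ∘ₗ νo (X (σ 2)) (X (σ 3))) = 0 := by
  obtain ⟨N, hN⟩ := exists_bilinear_of_apply_eq_multilinear hB (μ := ν.toMultilinearMap) hνo
  obtain ⟨e, he⟩ := LinearMap.BilinForm.exists_orthogonal_basis hsymm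
  simp only [← hN] at hνo ⊢
  rw [← alternatization_traceComp_apply,
    alternatization_traceComp_eq_zero_of_iIsOrtho hB hνo he (by simpa using hdim),
    AlternatingMap.zero_apply]

/-- `tr((dB)_o²) = 0` in dimension 4: for an alternating 4-form `ν` on a
4-dimensional real inner product space, with `ν_o` determined by
`⟪ν_o(X,Y)Z, W⟫ = 2ν(X,Y,Z,W)`, the 4-form `tr(ν_o∧ν_o)` vanishes identically. -/
theorem trace_wedge_nu_o_nu_o_eq_zero
    (V : Type*) [NormedAddCommGroup V] [InnerProductSpace ℝ V]
    (hdim : Module.finrank ℝ V = 4)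
    (ν : AlternatingMap ℝ V ℝ (Fin 4))
    (νo : V → V → V →ₗ[ℝ] V)
    (hνo : ∀ X Y Z W : V, ⟪νo X Y Z, W⟫ = 2 * ν ![X, Y, Z, W]) :
    ∀ X : Fin 4 → V,
      (1 / 4 : ℝ) * ∑ σ : Equiv.Perm (Fin 4),
          ((Equiv.Perm.sign σ : ℤ) : ℝ) *
            LinearMap.trace ℝ V (νo (X (σ 0)) (X (σ 1)) ∘ₗ νo (X (σ 2)) (X (σ 3))) = 0 := by
  have : FiniteDimensional ℝ V := Module.finite_of_finrank_pos (by omega)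
  exact fun X => mul_eq_zero_of_right _ <| trace_wedge_nu_o_nu_o_eq_zero_general (by omega)
    (nondegenerate_innerₗ V) isSymm_inner ((2 : ℝ) • ν) νo hνo X
end

section
/- Let V be a 6-dimensional real inner product space, Q the quadratic form Q(v) = −‖v‖² on V, Cl(V) the Clifford algebra of (V,Q), and λ : Cl(V) → ΛV the canonical linear isomorphism with the exterior algebra (the Clifford symbol map). If c ∈ Cl(V) satisfies λ(c) ∈ Λ⁴V, then λ(c·c) has nonzero graded components only in degrees 0 and 4; in particular, the degree-2 and degree-6 graded components of λ(c·c) are zero. -/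
/-!
Reversal is an anti-automorphism of the Clifford algebra and the grade involution is an
automorphism, so both fix `c * c` as soon as they send `c` to `c` or `-c`. The symbol map
intertwines them with the same maps of the exterior algebra, which act on `Λᵏ` by
`(-1)^(k choose 2)` and `(-1)^k`. Hence the square of any element with homogeneous symbol has its
symbol in the degrees where both signs are `+1`, that is, in the multiples of 4; in dimension
less than 8 only 0 and 4 remain.
-/

namespace CliffordSymbol

open CliffordAlgebra

section Contraction

variable {R M : Type*} [CommRing R] [AddCommGroup M] [Module R M] {Q : QuadraticForm R M}

theorem contractLeft_involute (d : Module.Dual R M) (x : CliffordAlgebra Q) :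
    contractLeft d (involute x) = -involute (contractLeft d x) := by
  induction x using CliffordAlgebra.left_induction with
  | algebraMap r => simp
  | add x y hx hy => simp only [map_add, hx, hy, neg_add]
  | ι_mul x m hx =>
    simp only [map_mul, involute_ι, neg_mul, map_neg, contractLeft_ι_mul, hx, map_sub, map_smul,
      mul_neg]

theorem contractLeft_mul_ι (d : Module.Dual R M) (x : CliffordAlgebra Q) (m : M) :
    contractLeft d (x * ι Q m) = contractLeft d x * ι Q m + d m • involute x := by
  induction x using CliffordAlgebra.left_induction with
  | algebraMap r =>
    rw [contractLeft_algebraMap_mul, contractLeft_ι, contractLeft_algebraMap, zero_mul, zero_add,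
      AlgHom.commutes, Algebra.smul_def, Algebra.commutes]
  | add x y hx hy =>
    simp only [add_mul, map_add, hx, hy, smul_add]
    abel
  | ι_mul x a hx =>
    simp only [mul_assoc, contractLeft_ι_mul, hx, map_mul, involute_ι, sub_mul, mul_add,
      smul_mul_assoc, mul_smul_comm, neg_mul, smul_neg]
    abel

theorem contractRight_ι_mul (d : Module.Dual R M) (m : M) (x : CliffordAlgebra Q) :
    contractRight (ι Q m * x) d = ι Q m * contractRight x d + d m • involute x := by
  simp only [contractRight_eq, reverse.map_mul, reverse_ι, contractLeft_mul_ι, map_add, map_smul,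
    reverse_involute, reverse_reverse]

theorem contractRight_contractLeft (d d' : Module.Dual R M) (x : CliffordAlgebra Q) :
    contractRight (contractLeft d x) d' = contractLeft d (contractRight x d') := by
  induction x using CliffordAlgebra.left_induction with
  | algebraMap r => simp
  | add x y hx hy => simp only [map_add, LinearMap.add_apply, hx, hy]
  | ι_mul x m hx =>
    simp only [contractLeft_ι_mul, contractRight_ι_mul, map_sub, map_add, map_smul,
      LinearMap.sub_apply, LinearMap.smul_apply, hx, contractLeft_involute, smul_neg]
    abel

end Contraction

section ChangeForm

variable {R M : Type*} [CommRing R] [AddCommGroup M] [Module R M] {Q Q' : QuadraticForm R M}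
  {B : LinearMap.BilinForm R M}

theorem changeForm_mul_ι (h : B.toQuadraticMap = Q' - Q) (hB : B.IsSymm) (x : CliffordAlgebra Q)
    (m : M) :
    changeForm h (x * ι Q m) =
      changeForm h x * ι Q' m - contractRight (changeForm h x) (B m) := by
  induction x using CliffordAlgebra.left_induction with
  | algebraMap r => simp [← Algebra.smul_def]
  | add x y hx hy =>
    simp only [add_mul, map_add, LinearMap.add_apply, hx, hy]
    abel
  | ι_mul x a hx =>
    -- With `y = changeForm h x`, the contraction by `B a` passes `m` at the cost of
    -- `B a m • involute y`, the one by `B m` passes `a` at the cost of `B m a • involute y`.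
    have hsymm : B a m = B m a := hB.eq a m
    simp only [mul_assoc, changeForm_ι_mul, hx, map_sub, LinearMap.sub_apply, contractRight_ι_mul,
      contractLeft_mul_ι, contractRight_contractLeft, hsymm, mul_sub, sub_mul]
    abel

theorem changeForm_reverse (h : B.toQuadraticMap = Q' - Q) (hB : B.IsSymm)
    (x : CliffordAlgebra Q) :
    changeForm h (reverse x) = reverse (changeForm h x) := by
  induction x using CliffordAlgebra.left_induction with
  | algebraMap r => simp
  | add x y hx hy => simp only [map_add, hx, hy]
  | ι_mul x m hx =>
    simp only [reverse.map_mul, reverse_ι, changeForm_mul_ι h hB, changeForm_ι_mul, hx,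
      contractRight_eq, reverse_reverse, map_sub]

theorem changeForm_involute (h : B.toQuadraticMap = Q' - Q) (x : CliffordAlgebra Q) :
    changeForm h (involute x) = involute (changeForm h x) := by
  induction x using CliffordAlgebra.left_induction with
  | algebraMap r => simp
  | add x y hx hy => simp only [map_add, hx, hy]
  | ι_mul x m hx =>
    simp only [map_mul, involute_ι, neg_mul, map_neg, changeForm_ι_mul, hx, contractLeft_involute,
      map_sub]
    abel

variable [Invertible (2 : R)]

theorem equivExterior_reverse (x : CliffordAlgebra Q) :
    equivExterior Q (reverse x) = reverse (equivExterior Q x) :=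
  changeForm_reverse changeForm.associated_neg_proof ⟨QuadraticMap.associated_isSymm R (-Q)⟩ x

theorem equivExterior_involute (x : CliffordAlgebra Q) :
    equivExterior Q (involute x) = involute (equivExterior Q x) :=
  changeForm_involute changeForm.associated_neg_proof x

end ChangeForm

section ExteriorPower

variable {R M : Type*} [CommRing R] [AddCommGroup M] [Module R M]

theorem exteriorAlgebra_mul_ι (x : ExteriorAlgebra R M) (m : M) :
    x * ExteriorAlgebra.ι R m = ExteriorAlgebra.ι R m * involute x := by
  induction x using CliffordAlgebra.left_induction with
  | algebraMap r => simp only [AlgHom.commutes, Algebra.commutes]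
  | add x y hx hy => simp only [add_mul, mul_add, map_add, hx, hy]
  | ι_mul x a hx =>
    have hswap : ι 0 a * ι 0 m = -(ι (0 : QuadraticForm R M) m * ι 0 a) :=
      eq_neg_of_add_eq_zero_left (ExteriorAlgebra.ι_add_mul_swap a m)
    calc ι 0 a * x * ι 0 m = ι 0 a * ι 0 m * involute x := by rw [mul_assoc, hx, mul_assoc]
      _ = ι 0 m * involute (ι 0 a * x) := by
        rw [hswap, map_mul, involute_ι, neg_mul, neg_mul, mul_neg, mul_assoc]

theorem involute_of_mem_exteriorPower {k : ℕ} {x : ExteriorAlgebra R M} (hx : x ∈ ⋀[R]^k M) :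
    involute x = (-1 : R) ^ k • x := by
  induction hx using Submodule.pow_induction_on_left' with
  | algebraMap r => simp
  | add x y k _ _ hx hy => simp only [map_add, smul_add, hx, hy]
  | mem_mul _ hm k x _ hx =>
    obtain ⟨m, rfl⟩ := hm
    rw [map_mul, hx, involute_ι, neg_mul, mul_smul_comm, pow_succ, mul_neg_one, neg_smul]

theorem reverse_of_mem_exteriorPower {k : ℕ} {x : ExteriorAlgebra R M} (hx : x ∈ ⋀[R]^k M) :
    reverse x = (-1 : R) ^ k.choose 2 • x := by
  induction hx using Submodule.pow_induction_on_left' with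
  | algebraMap r => simp
  | add x y k _ _ hx hy => simp only [map_add, smul_add, hx, hy]
  | mem_mul _ hm k x hxk hx =>
    obtain ⟨m, rfl⟩ := hm
    rw [reverse.map_mul, hx, reverse_ι, smul_mul_assoc, exteriorAlgebra_mul_ι,
      involute_of_mem_exteriorPower hxk, mul_smul_comm, smul_smul, ← pow_add,
      Nat.choose_succ_succ' k 1, Nat.choose_one_right, add_comm]

theorem exteriorPower_eq_bot_of_spanFinrank_lt [Module.Finite R M] {n : ℕ}
    (hn : (⊤ : Submodule R M).spanFinrank < n) : ⋀[R]^n M = ⊥ := by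
  obtain ⟨s, hcard, hspan⟩ :=
    (Module.Finite.fg_top (R := R) (M := M)).exists_span_finset_card_eq_spanFinrank
  rw [← exteriorPower.ιMulti_span_fixedDegree_of_span_eq_top R n M hspan, Submodule.span_eq_bot]
  rintro _ ⟨a, ha, rfl⟩
  refine AlternatingMap.map_eq_zero_of_not_injective _ _ fun hinj => ?_
  have hle : n ≤ s.card := by
    simpa using Finset.card_le_card_of_injOn (s := Finset.univ) a
      (fun j _ => ha (Set.mem_range_self j)) hinj.injOn
  omega

end ExteriorPower

section GradedProjection

variable {ι R A : Type*} [DecidableEq ι] [AddMonoid ι]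

theorem proj_apply_eq_smul_proj [CommSemiring R] [Semiring A] [Algebra R A]
    (𝒜 : ι → Submodule R A) [GradedAlgebra 𝒜] {f : A →ₗ[R] A} {s : ι → R}
    (hf : ∀ j, ∀ x ∈ 𝒜 j, f x = s j • x) (i : ι) (x : A) :
    GradedAlgebra.proj 𝒜 i (f x) = s i • GradedAlgebra.proj 𝒜 i x := by
  induction x using DirectSum.Decomposition.inductionOn 𝒜 with
  | zero => simp only [map_zero, smul_zero]
  | add x y hx hy => simp only [map_add, hx, hy, smul_add]
  | @homogeneous j x =>
    rw [hf j x x.2, map_smul]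
    obtain rfl | hij := eq_or_ne i j
    · rfl
    · simp only [GradedAlgebra.proj_apply, DirectSum.decompose_coe, DirectSum.of_eq_of_ne _ _ _ hij,
        ZeroMemClass.coe_zero, smul_zero]

theorem proj_eq_zero_of_apply_eq_self [CommRing R] [Ring A] [Algebra R A]
    (𝒜 : ι → Submodule R A) [GradedAlgebra 𝒜] {f : A →ₗ[R] A} {s : ι → R}
    (hf : ∀ j, ∀ x ∈ 𝒜 j, f x = s j • x) {i : ι}
    (hs : IsUnit (1 - s i)) {x : A} (hx : f x = x) : GradedAlgebra.proj 𝒜 i x = 0 := by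
  have hproj := proj_apply_eq_smul_proj 𝒜 hf i x
  rw [hx] at hproj
  rw [← hs.smul_eq_zero, sub_smul, one_smul, ← hproj, sub_self]

end GradedProjection

theorem odd_choose_two_of_even {n : ℕ} (hn : Even n) (h4 : ¬4 ∣ n) : Odd (n.choose 2) := by
  obtain ⟨m, rfl⟩ : ∃ m, n = 2 * (2 * m + 1) := ⟨n / 4, by grind⟩
  rw [Nat.choose_two_right, mul_assoc, Nat.mul_div_cancel_left _ two_pos]
  exact Odd.mul ⟨m, rfl⟩ ⟨2 * m, by omega⟩

section Square

variable {R M : Type*} [CommRing R] [AddCommGroup M] [Module R M] [Invertible (2 : R)]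
  {Q : QuadraticForm R M} {c : CliffordAlgebra Q} {k : ℕ}

theorem reverse_of_equivExterior_mem (hc : equivExterior Q c ∈ ⋀[R]^k M) :
    reverse c = (-1 : R) ^ k.choose 2 • c :=
  (equivExterior Q).injective <| by
    rw [equivExterior_reverse, reverse_of_mem_exteriorPower hc, map_smul]

theorem involute_of_equivExterior_mem (hc : equivExterior Q c ∈ ⋀[R]^k M) :
    involute c = (-1 : R) ^ k • c :=
  (equivExterior Q).injective <| by
    rw [equivExterior_involute, involute_of_mem_exteriorPower hc, map_smul]

theorem reverse_mul_self_of_equivExterior_mem (hc : equivExterior Q c ∈ ⋀[R]^k M) :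
    reverse (c * c) = c * c := by
  rw [reverse.map_mul, reverse_of_equivExterior_mem hc, smul_mul_smul_comm, ← mul_pow,
    neg_one_mul, neg_neg, one_pow, one_smul]

theorem involute_mul_self_of_equivExterior_mem (hc : equivExterior Q c ∈ ⋀[R]^k M) :
    involute (c * c) = c * c := by
  rw [map_mul, involute_of_equivExterior_mem hc, smul_mul_smul_comm, ← mul_pow, neg_one_mul,
    neg_neg, one_pow, one_smul]

theorem proj_equivExterior_mul_self_eq_zero (hc : equivExterior Q c ∈ ⋀[R]^k M) {i : ℕ}
    (hi : ¬4 ∣ i) :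
    GradedAlgebra.proj (fun j : ℕ => ⋀[R]^j M) i (equivExterior Q (c * c)) = 0 := by
  have isUnit_one_sub {n : ℕ} (hn : Odd n) : IsUnit (1 - (-1 : R) ^ n) := by
    rw [hn.neg_one_pow, sub_neg_eq_add, one_add_one_eq_two]
    exact isUnit_of_invertible 2
  rcases Nat.even_or_odd i with heven | hodd
  · refine proj_eq_zero_of_apply_eq_self _ (f := reverse) (s := fun j => (-1) ^ j.choose 2)
      (fun _ _ => reverse_of_mem_exteriorPower)
      (isUnit_one_sub (odd_choose_two_of_even heven hi)) ?_
    rw [← equivExterior_reverse, reverse_mul_self_of_equivExterior_mem hc]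
  · refine proj_eq_zero_of_apply_eq_self _ (f := involute.toLinearMap) (s := fun j => (-1) ^ j)
      (fun _ _ => involute_of_mem_exteriorPower) (isUnit_one_sub hodd) ?_
    rw [AlgHom.toLinearMap_apply, ← equivExterior_involute,
      involute_mul_self_of_equivExterior_mem hc]

end Square

end CliffordSymbol

theorem clifford_square_of_four_form_dim_six_general
    {R M : Type*} [CommRing R] [Invertible (2 : R)] [AddCommGroup M] [Module R M]
    [Module.Finite R M] (hM : (⊤ : Submodule R M).spanFinrank < 8)
    {Q : QuadraticForm R M} {c : CliffordAlgebra Q} {k : ℕ}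
    (hc : CliffordAlgebra.equivExterior Q c ∈ ⋀[R]^k M) {i : ℕ} (hi : i ∉ ({0, 4} : Set ℕ)) :
    GradedAlgebra.proj (fun j : ℕ => ⋀[R]^j M) i
      (CliffordAlgebra.equivExterior Q (c * c)) = 0 := by
  by_cases h4 : 4 ∣ i
  · have hi8 : 8 ≤ i := by
      simp only [Set.mem_insert_iff, Set.mem_singleton_iff] at hi
      omega
    have hbot : ⋀[R]^i M = ⊥ :=
      CliffordSymbol.exteriorPower_eq_bot_of_spanFinrank_lt (hM.trans_le hi8)
    rw [← Submodule.mem_bot R, ← hbot]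
    exact SetLike.coe_mem _
  · exact CliffordSymbol.proj_equivExterior_mul_self_eq_zero hc h4

/-- in a 6-dimensional real inner product space with Clifford algebra of the
quadratic form `Q(v) = −‖v‖²`, the Clifford square of an element whose Clifford symbol is a
4-form has symbol with nonzero graded components only in degrees 0 and 4; in particular its
degree-2 and degree-6 components vanish. -/
theorem clifford_square_of_four_form_dim_six
    (V : Type*) [NormedAddCommGroup V] [InnerProductSpace ℝ V]
    (hdim : Module.finrank ℝ V = 6)
    (Q : QuadraticForm ℝ V) (hQ : ∀ v : V, Q v = -‖v‖ ^ 2)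
    (c : CliffordAlgebra Q)
    (hc : CliffordAlgebra.equivExterior Q c ∈ (⋀[ℝ]^4 V : Submodule ℝ (ExteriorAlgebra ℝ V))) :
    (∀ i : ℕ, i ∉ ({0, 4} : Set ℕ) →
        GradedAlgebra.proj (fun i : ℕ => (⋀[ℝ]^i V : Submodule ℝ (ExteriorAlgebra ℝ V))) i
          (CliffordAlgebra.equivExterior Q (c * c)) = 0) ∧
      GradedAlgebra.proj (fun i : ℕ => (⋀[ℝ]^i V : Submodule ℝ (ExteriorAlgebra ℝ V))) 2
          (CliffordAlgebra.equivExterior Q (c * c)) = 0 ∧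
      GradedAlgebra.proj (fun i : ℕ => (⋀[ℝ]^i V : Submodule ℝ (ExteriorAlgebra ℝ V))) 6
          (CliffordAlgebra.equivExterior Q (c * c)) = 0 := by
  have : Module.Finite ℝ V := Module.finite_of_finrank_eq_succ hdim
  have hV : (⊤ : Submodule ℝ V).spanFinrank < 8 := by
    rw [← Module.finrank_eq_spanFinrank_of_free, hdim]
    norm_num
  have hproj := fun i => clifford_square_of_four_form_dim_six_general hV hc (i := i)
  exact ⟨hproj, hproj 2 (by simp), hproj 6 (by simp)⟩
end
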